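/- arXiv:1306.4141 — 3 statements merged into one kernel-verified Lean document; each statement's English description precedes it below -/
import Mathlib

section
/- Let n ≥ 1 and let P, Q ∈ ℂ[X] be coprime monic polynomials of degree n, and set R = P − Q. Let p and q denote the numbers of distinct complex roots of P and Q respectively. Then deg R = (n + 1) − (p + q) if and only if both of the following hold: (a) R is squarefree, and (b) for every y ∈ ℂ with y ≠ 0 and y ≠ 1, the polynomial (1 − y)·P + y·Q is squarefree. -/
open Polynomial

/-!
Let `W` be the Wronskian of `P` and `Q`. At a root of `P Q`, the multiplicity of `W` is one less
than that of `P Q`. As `W` is also, up to sign, the Wronskian of `P` and `R = P - Q`, its degree is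
`n + deg R - 1`. Counting roots, `deg R - (n + 1 - p - q)` is the number of roots of `W`, with
multiplicity, at which `P Q` does not vanish. These roots are exactly the multiple roots of the
members `s P + t Q` (`s, t ≠ 0`) of the pencil, and up to scaling those members are `R` and the
`(1 - y) P + y Q` with `y ≠ 0, 1`.
-/

section MultisetCount

variable {α : Type*} [DecidableEq α]

lemma add_filter_notMem_eq_add_dedup {s t : Multiset α}
    (h : ∀ a ∈ t, s.count a + 1 = t.count a) :
    t + s.filter (· ∉ t) = s + t.dedup := by
  ext a
  by_cases ha : a ∈ t
  · simp [ha, h a ha]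
  · simp [ha]

end MultisetCount

section WronskianDegree

variable {A : Type*} [CommRing A] {P Q : A[X]}

lemma coeff_X_mul_derivative (P : A[X]) (k : ℕ) : (X * derivative P).coeff k = k * P.coeff k := by
  cases k with
  | zero => simp
  | succ k => rw [coeff_X_mul, coeff_derivative, mul_comm, Nat.cast_succ]

lemma natDegree_X_mul_derivative_le (P : A[X]) : (X * derivative P).natDegree ≤ P.natDegree :=
  natDegree_le_iff_coeff_eq_zero.2 fun k hk ↦ by
    rw [coeff_X_mul_derivative, coeff_eq_zero_of_natDegree_lt hk, mul_zero]

-- The factor `X` makes both products in the Wronskian have degree at most `deg P + deg Q`,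
-- without a case distinction on constant polynomials.
lemma coeff_X_mul_wronskian (P Q : A[X]) :
    (X * wronskian P Q).coeff (P.natDegree + Q.natDegree) =
      (Q.natDegree - P.natDegree) * (P.leadingCoeff * Q.leadingCoeff) := by
  have hX : X * wronskian P Q = P * (X * derivative Q) - X * derivative P * Q := by
    rw [wronskian]; ring
  rw [hX, coeff_sub, coeff_mul_add_eq_of_natDegree_le le_rfl (natDegree_X_mul_derivative_le Q),
    coeff_mul_add_eq_of_natDegree_le (natDegree_X_mul_derivative_le P) le_rfl,
    coeff_X_mul_derivative, coeff_X_mul_derivative, coeff_natDegree, coeff_natDegree]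
  ring

variable [NoZeroDivisors A] [CharZero A]

lemma coeff_X_mul_wronskian_ne_zero (hP : P ≠ 0) (hQ : Q ≠ 0) (h : P.natDegree ≠ Q.natDegree) :
    (X * wronskian P Q).coeff (P.natDegree + Q.natDegree) ≠ 0 := by
  rw [coeff_X_mul_wronskian]
  exact mul_ne_zero (sub_ne_zero.2 (Nat.cast_injective.ne h.symm))
    (mul_ne_zero (leadingCoeff_ne_zero.2 hP) (leadingCoeff_ne_zero.2 hQ))

lemma wronskian_ne_zero_of_natDegree_ne (hP : P ≠ 0) (hQ : Q ≠ 0)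
    (h : P.natDegree ≠ Q.natDegree) : wronskian P Q ≠ 0 := fun hW ↦
  coeff_X_mul_wronskian_ne_zero hP hQ h (by rw [hW, mul_zero, coeff_zero])

lemma natDegree_wronskian_add_one (hP : P ≠ 0) (hQ : Q ≠ 0) (h : P.natDegree ≠ Q.natDegree) :
    (wronskian P Q).natDegree + 1 = P.natDegree + Q.natDegree := by
  have hW := wronskian_ne_zero_of_natDegree_ne hP hQ h
  refine le_antisymm (natDegree_wronskian_lt_add hW) ?_
  rw [← natDegree_X_mul hW]
  exact le_natDegree_of_ne_zero (coeff_X_mul_wronskian_ne_zero hP hQ h)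

end WronskianDegree

section WronskianRoots

variable {A : Type*} [CommRing A] {P Q : A[X]} {a : A}

lemma not_isRoot_of_isCoprime [Nontrivial A] (h : IsCoprime P Q) (ha : P.IsRoot a) :
    ¬Q.IsRoot a := by
  simpa [ha.eq_zero] using aeval_ne_zero_of_isCoprime h a

lemma rootMultiplicity_sub_of_dvd (hQ : Q ≠ 0)
    (h : (X - C a) ^ (Q.rootMultiplicity a + 1) ∣ P) :
    (P - Q).rootMultiplicity a = Q.rootMultiplicity a := by
  have hnd : ¬(X - C a) ^ (Q.rootMultiplicity a + 1) ∣ P - Q := by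
    rw [dvd_sub_right h, ← le_rootMultiplicity_iff hQ]
    exact Nat.not_succ_le_self _
  have hne : P - Q ≠ 0 := fun h0 ↦ hnd (h0 ▸ dvd_zero _)
  refine le_antisymm (Nat.lt_succ_iff.1 (lt_of_not_ge ?_)) ?_
  · rwa [Nat.succ_eq_add_one, le_rootMultiplicity_iff hne]
  · rw [le_rootMultiplicity_iff hne]
    exact dvd_sub ((pow_dvd_pow _ (Nat.le_succ _)).trans h) (pow_rootMultiplicity_dvd Q a)

variable [IsDomain A]

lemma card_toFinset_roots_mul_of_isCoprime [DecidableEq A] (hcop : IsCoprime P Q)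
    (hPQ : P * Q ≠ 0) :
    (P * Q).roots.toFinset.card = P.roots.toFinset.card + Q.roots.toFinset.card := by
  rw [roots_mul hPQ, Multiset.toFinset_add, Finset.card_union_of_disjoint]
  refine Finset.disjoint_left.2 fun a hPa hQa ↦ ?_
  rw [Multiset.mem_toFinset] at hPa hQa
  exact not_isRoot_of_isCoprime hcop (isRoot_of_mem_roots hPa) (isRoot_of_mem_roots hQa)

lemma rootMultiplicity_wronskian_comm (P Q : A[X]) (a : A) :
    (wronskian P Q).rootMultiplicity a = (wronskian Q P).rootMultiplicity a := by
  classical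
  rw [← count_roots, ← count_roots, ← wronskian_neg_eq P Q, roots_neg]

variable [CharZero A]

lemma rootMultiplicity_wronskian_add_one (hP : P ≠ 0) (hPa : P.IsRoot a) (hQa : ¬Q.IsRoot a) :
    (wronskian P Q).rootMultiplicity a + 1 = P.rootMultiplicity a := by
  have hdP : derivative P ≠ 0 := fun h ↦ by
    rw [eq_C_of_derivative_eq_zero h] at hPa hP
    simp_all
  have hdPQ : derivative P * Q ≠ 0 := mul_ne_zero hdP fun h ↦ hQa (h ▸ eval_zero)
  have hmult : (derivative P * Q).rootMultiplicity a + 1 = P.rootMultiplicity a := by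
    rw [rootMultiplicity_mul hdPQ, rootMultiplicity_eq_zero hQa, add_zero,
      derivative_rootMultiplicity_of_root hPa, Nat.sub_add_cancel ((rootMultiplicity_pos hP).2 hPa)]
  rw [wronskian, rootMultiplicity_sub_of_dvd hdPQ, hmult]
  rw [hmult]
  exact (pow_rootMultiplicity_dvd P a).mul_right _

lemma rootMultiplicity_wronskian_add_one_of_isRoot_mul (hcop : IsCoprime P Q) (hPQ : P * Q ≠ 0)
    (ha : (P * Q).IsRoot a) :
    (wronskian P Q).rootMultiplicity a + 1 = (P * Q).rootMultiplicity a := by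
  rw [rootMultiplicity_mul hPQ]
  rcases root_mul.1 ha with hPa | hQa
  · have hQa := not_isRoot_of_isCoprime hcop hPa
    rw [rootMultiplicity_wronskian_add_one (left_ne_zero_of_mul hPQ) hPa hQa,
      rootMultiplicity_eq_zero hQa, add_zero]
  · have hPa := not_isRoot_of_isCoprime hcop.symm hQa
    rw [rootMultiplicity_wronskian_comm,
      rootMultiplicity_wronskian_add_one (right_ne_zero_of_mul hPQ) hQa hPa,
      rootMultiplicity_eq_zero hPa, zero_add]

lemma roots_mul_add_filter_roots_wronskian [DecidableEq A] (hcop : IsCoprime P Q)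
    (hPQ : P * Q ≠ 0) :
    (P * Q).roots + (wronskian P Q).roots.filter (· ∉ (P * Q).roots) =
      (wronskian P Q).roots + (P * Q).roots.dedup :=
  add_filter_notMem_eq_add_dedup fun a ha ↦ by
    rw [count_roots, count_roots]
    exact rootMultiplicity_wronskian_add_one_of_isRoot_mul hcop hPQ (isRoot_of_mem_roots ha)

end WronskianRoots

section AlgClosed

variable {K : Type*} [Field K] [IsAlgClosed K] {P Q : K[X]}

lemma natDegree_mul_add_card_filter_roots_wronskian [CharZero K] [DecidableEq K]
    (hcop : IsCoprime P Q) (hPQ : P * Q ≠ 0) :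
    (P * Q).natDegree + ((wronskian P Q).roots.filter (· ∉ (P * Q).roots)).card =
      (wronskian P Q).natDegree + (P.roots.toFinset.card + Q.roots.toFinset.card) := by
  have h := congrArg Multiset.card (roots_mul_add_filter_roots_wronskian hcop hPQ)
  rwa [Multiset.card_add, Multiset.card_add, IsAlgClosed.card_roots_eq_natDegree,
    IsAlgClosed.card_roots_eq_natDegree, ← Multiset.card_toFinset,
    card_toFinset_roots_mul_of_isCoprime hcop hPQ] at h

lemma natDegree_sub_eq_iff_forall_isRoot_wronskian [CharZero K] [DecidableEq K]
    (hcop : IsCoprime P Q) (hlt : (P - Q).natDegree < P.natDegree) :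
    ((P - Q).natDegree : ℤ) =
        (P.natDegree + 1 : ℤ) - ((P.roots.toFinset.card : ℤ) + (Q.roots.toFinset.card : ℤ)) ↔
      ∀ a, (wronskian P Q).IsRoot a → (P * Q).IsRoot a := by
  have hQdeg : Q.natDegree = P.natDegree := by
    simpa using natDegree_sub_eq_left_of_natDegree_lt hlt
  have hP : P ≠ 0 := ne_zero_of_natDegree_gt hlt
  have hPQ : P * Q ≠ 0 := mul_ne_zero hP (ne_zero_of_natDegree_gt (hQdeg ▸ hlt))
  have hR : P - Q ≠ 0 := fun h ↦ by
    have hunit : IsUnit P := isCoprime_self.1 (sub_eq_zero.1 h ▸ hcop)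
    exact hlt.ne_bot (natDegree_eq_zero_of_isUnit hunit)
  have hWR : wronskian P (P - Q) = -wronskian P Q := by
    rw [sub_eq_add_neg, wronskian_add_right, wronskian_self_eq_zero, wronskian_neg_right, zero_add]
  have hW : wronskian P Q ≠ 0 :=
    neg_ne_zero.1 (hWR ▸ wronskian_ne_zero_of_natDegree_ne hP hR hlt.ne')
  have hWdeg : (wronskian P Q).natDegree + 1 = P.natDegree + (P - Q).natDegree := by
    rw [← natDegree_wronskian_add_one hP hR hlt.ne', hWR, natDegree_neg]
  have hcount := natDegree_mul_add_card_filter_roots_wronskian hcop hPQ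
  rw [natDegree_mul hP (right_ne_zero_of_mul hPQ)] at hcount
  have hcard : ((P - Q).natDegree : ℤ) =
        (P.natDegree + 1 : ℤ) - ((P.roots.toFinset.card : ℤ) + (Q.roots.toFinset.card : ℤ)) ↔
      ((wronskian P Q).roots.filter (· ∉ (P * Q).roots)).card = 0 := by
    lia
  rw [hcard, Multiset.card_eq_zero, Multiset.filter_eq_nil]
  simp only [not_not, mem_roots hW, mem_roots hPQ]

lemma squarefree_iff_forall_not_isRoot_derivative {S : K[X]} :
    Squarefree S ↔ ∀ a, S.IsRoot a → ¬(derivative S).IsRoot a := by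
  rw [← PerfectField.separable_iff_squarefree, Polynomial.Separable,
    isCoprime_iff_aeval_ne_zero_of_isAlgClosed K K S (derivative S)]
  simp only [coe_aeval_eq_eval, IsRoot.def, ne_eq, imp_iff_not_or]

lemma forall_isRoot_wronskian_iff_forall_squarefree (hcop : IsCoprime P Q) :
    (∀ a, (wronskian P Q).IsRoot a → (P * Q).IsRoot a) ↔
      ∀ s t : K, s ≠ 0 → t ≠ 0 → Squarefree (C s * P + C t * Q) := by
  simp only [squarefree_iff_forall_not_isRoot_derivative, wronskian, IsRoot.def,
    derivative_add, derivative_C_mul, eval_add, eval_sub, eval_mul, eval_C, mul_eq_zero]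
  constructor
  · intro h s t hs ht a h0 h1
    have hWa : P.eval a * (derivative Q).eval a - (derivative P).eval a * Q.eval a = 0 := by
      refine (mul_eq_zero_iff_left hs).1 ?_
      linear_combination (derivative Q).eval a * h0 - Q.eval a * h1
    rcases h a hWa with hPa | hQa
    · have hQa : Q.eval a = 0 := by simpa [hPa, ht] using h0
      exact not_isRoot_of_isCoprime hcop hPa hQa
    · have hPa : P.eval a = 0 := by simpa [hQa, hs] using h0
      exact not_isRoot_of_isCoprime hcop hPa hQa
  · intro h a hWa
    by_contra! hPQa
    -- The member of the pencil vanishing at `a`; its derivative there is `-W(a)`.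
    refine h (Q.eval a) (-P.eval a) hPQa.2 (neg_ne_zero.2 hPQa.1) a ?_ ?_
    · ring
    · linear_combination -hWa

end AlgClosed

section Pencil

variable {K : Type*} [Field K] {P Q : K[X]}

lemma squarefree_C_mul_iff {c : K} (hc : c ≠ 0) : Squarefree (C c * P) ↔ Squarefree P :=
  (associated_unit_mul_left P _ (isUnit_C.2 hc.isUnit)).squarefree_iff

lemma forall_squarefree_C_mul_add_C_mul_iff :
    (∀ s t : K, s ≠ 0 → t ≠ 0 → Squarefree (C s * P + C t * Q)) ↔
      Squarefree (P - Q) ∧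
        ∀ y : K, y ≠ 0 → y ≠ 1 → Squarefree ((1 - C y) * P + C y * Q) := by
  constructor
  · refine fun h ↦ ⟨?_, fun y hy0 hy1 ↦ ?_⟩
    · simpa [sub_eq_add_neg] using h 1 (-1) one_ne_zero (neg_ne_zero.2 one_ne_zero)
    · simpa using h (1 - y) y (sub_ne_zero.2 hy1.symm) hy0
  · rintro ⟨hsub, hline⟩ s t hs ht
    by_cases hst : s + t = 0
    · have hmember : C s * P + C t * Q = C s * (P - Q) := by
        rw [eq_neg_of_add_eq_zero_right hst, C_neg]; ring
      rwa [hmember, squarefree_C_mul_iff hs]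
    · have hy1 : t / (s + t) ≠ 1 := by
        rw [Ne, div_eq_one_iff_eq hst]
        exact fun h ↦ hs (by linear_combination -h)
      have hCt : C (s + t) * C (t / (s + t)) = C t := by rw [← C_mul, mul_div_cancel₀ _ hst]
      have hmember : C s * P + C t * Q =
          C (s + t) * ((1 - C (t / (s + t))) * P + C (t / (s + t)) * Q) := by
        rw [C_add] at hCt ⊢
        linear_combination (P - Q) * hCt
      rw [hmember, squarefree_C_mul_iff hst]
      exact hline _ (div_ne_zero ht hst) hy1

end Pencil

theorem stmt2_general {K : Type*} [Field K] [IsAlgClosed K] [CharZero K] [DecidableEq K]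
    {P Q : K[X]} (hcop : IsCoprime P Q) (hlt : (P - Q).natDegree < P.natDegree) :
    (((P - Q).natDegree : ℤ)
        = (P.natDegree + 1 : ℤ)
          - ((P.roots.toFinset.card : ℤ) + (Q.roots.toFinset.card : ℤ))) ↔
      (Squarefree (P - Q) ∧
        ∀ y : K, y ≠ 0 → y ≠ 1 → Squarefree ((1 - C y) * P + C y * Q)) := by
  rw [natDegree_sub_eq_iff_forall_isRoot_wronskian hcop hlt,
    forall_isRoot_wronskian_iff_forall_squarefree hcop, forall_squarefree_C_mul_add_C_mul_iff]

/-- For coprime monic `P, Q` of degree `n`, the difference `R = P - Q` has the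
minimal possible degree `(n + 1) - (p + q)` iff `R` is squarefree and every
combination `(1 - y)·P + y·Q` (for `y ≠ 0, 1`) is squarefree. -/
theorem stmt2 (n : ℕ) (hn : 1 ≤ n) (P Q : ℂ[X])
    (hcop : IsCoprime P Q) (hPm : P.Monic) (hQm : Q.Monic)
    (hP : P.natDegree = n) (hQ : Q.natDegree = n) :
    (((P - Q).natDegree : ℤ)
        = (n + 1 : ℤ) - ((P.roots.toFinset.card : ℤ) + (Q.roots.toFinset.card : ℤ))) ↔
      (Squarefree (P - Q) ∧
        ∀ y : ℂ, y ≠ 0 → y ≠ 1 → Squarefree ((1 - C y) * P + C y * Q)) := by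
  have hlt : (P - Q).natDegree < n :=
    IsMonicOfDegree.natDegree_sub_lt (Nat.one_le_iff_ne_zero.1 hn) ⟨hP, hPm⟩ ⟨hQ, hQm⟩
  exact hP ▸ stmt2_general hcop (hP ▸ hlt)
end

section
/- Let k ≥ 1 and let A, B ∈ ℂ[X] be coprime polynomials with deg A = 2k and deg B = 3k. Then A³ ≠ B² and deg(A³ − B²) ≥ k + 1. -/
open Polynomial

/-!
For coprime `A`, `B` of degrees `n * k` and `m * k`, apply the Mason–Stothers theorem to `A ^ m`,
`B ^ n` and their difference. Passing to radicals replaces the powers `A ^ m`, `B ^ n` by `A`, `B`,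
so `deg (A ^ m) = m * n * k` is smaller than `deg A + deg B + deg (A ^ m - B ^ n)`. Davenport's
bound is the case `m = 3`, `n = 2`.
-/

theorem ne_of_isCoprime_of_not_isUnit {R : Type*} [CommSemiring R] {a b : R}
    (hab : IsCoprime a b) (ha : ¬IsUnit a) : a ≠ b := by
  rintro rfl
  exact ha (isCoprime_self.mp hab)

section Derivative

variable {R : Type*} [Semiring R] [NoZeroDivisors R] {p : R[X]}

theorem derivative_ne_zero_of_natDegree_cast_ne_zero (hp : (p.natDegree : R) ≠ 0) :
    derivative p ≠ 0 := by
  have hp0 : p ≠ 0 := fun h => hp (by rw [h, natDegree_zero, Nat.cast_zero])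
  have hdeg : p.natDegree ≠ 0 := fun h => hp (by rw [h, Nat.cast_zero])
  obtain ⟨d, hd⟩ := Nat.exists_eq_add_one_of_ne_zero hdeg
  have hcoeff : (derivative p).coeff d = p.leadingCoeff * p.natDegree := by
    rw [coeff_derivative, leadingCoeff, hd, Nat.cast_add_one]
  intro hder
  rw [hder, coeff_zero] at hcoeff
  exact mul_ne_zero (leadingCoeff_ne_zero.mpr hp0) hp hcoeff.symm

theorem not_isUnit_of_derivative_ne_zero (hp : derivative p ≠ 0) : ¬IsUnit p :=
  fun hunit => hp (derivative_of_natDegree_zero (natDegree_eq_zero_of_isUnit hunit))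

end Derivative

section Radical

open UniqueFactorizationMonoid UniqueFactorizationDomain

variable {K : Type*} [Field K] [DecidableEq K]

theorem natDegree_radical_mul_le (p q : K[X]) :
    (radical (p * q)).natDegree ≤ (radical p).natDegree + (radical q).natDegree := by
  rw [← natDegree_mul radical_ne_zero radical_ne_zero]
  exact natDegree_le_of_dvd radical_mul_dvd (mul_ne_zero radical_ne_zero radical_ne_zero)

theorem natDegree_radical_pow_le (p : K[X]) (n : ℕ) :
    (radical (p ^ n)).natDegree ≤ p.natDegree :=
  (natDegree_le_of_dvd radical_pow_dvd radical_ne_zero).trans natDegree_radical_le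

theorem natDegree_lt_natDegree_radical_add_of_isCoprime {p q : K[X]} (hpq : IsCoprime p q)
    (hp : derivative p ≠ 0) :
    p.natDegree <
      (radical p).natDegree + (radical q).natDegree + (radical (p - q)).natDegree := by
  have hunit : ¬IsUnit p := not_isUnit_of_derivative_ne_zero hp
  have hp0 : p ≠ 0 := fun h => hp (by rw [h, derivative_zero])
  have hq0 : q ≠ 0 := fun h => hunit (isCoprime_zero_right.mp (h ▸ hpq))
  have hsub0 : p - q ≠ 0 := sub_ne_zero.mpr (ne_of_isCoprime_of_not_isUnit hpq hunit)
  have habc := Polynomial.abc hp0 (neg_ne_zero.mpr hq0) (neg_ne_zero.mpr hsub0) hpq.neg_right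
    (by ring)
  calc p.natDegree
      < (radical (p * -q * -(p - q))).natDegree :=
        (habc.resolve_right fun h => hp h.1).1
    _ ≤ (radical p).natDegree + (radical (-q)).natDegree + (radical (-(p - q))).natDegree :=
        (natDegree_radical_mul_le _ _).trans (by gcongr; exact natDegree_radical_mul_le _ _)
    _ = (radical p).natDegree + (radical q).natDegree + (radical (p - q)).natDegree := by
        rw [radical_neg, radical_neg]

end Radical

theorem natDegree_pow_lt_of_isCoprime {K : Type*} [Field K] {p q : K[X]} (hpq : IsCoprime p q)
    {m : ℕ} (n : ℕ) (hp : derivative (p ^ m) ≠ 0) :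
    (p ^ m).natDegree < p.natDegree + q.natDegree + (p ^ m - q ^ n).natDegree := by
  classical
  exact (natDegree_lt_natDegree_radical_add_of_isCoprime hpq.pow hp).trans_le
    (add_le_add (add_le_add (natDegree_radical_pow_le p m) (natDegree_radical_pow_le q n))
      natDegree_radical_le)

theorem stmt3_general {K : Type*} [Field K] (m n k : ℕ) (hmnk : ((m * n * k : ℕ) : K) ≠ 0)
    (A B : K[X]) (hcop : IsCoprime A B)
    (hA : A.natDegree = n * k) (hB : B.natDegree = m * k) :
    A ^ m ≠ B ^ n ∧ m * n * k + 1 ≤ (m + n) * k + (A ^ m - B ^ n).natDegree := by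
  have hdeg : (A ^ m).natDegree = m * n * k := by rw [natDegree_pow, hA, mul_assoc]
  have hder : derivative (A ^ m) ≠ 0 :=
    derivative_ne_zero_of_natDegree_cast_ne_zero (by rwa [hdeg])
  have hlt := natDegree_pow_lt_of_isCoprime hcop n hder
  rw [hdeg, hA, hB] at hlt
  exact ⟨ne_of_isCoprime_of_not_isUnit hcop.pow (not_isUnit_of_derivative_ne_zero hder),
    by linarith⟩

/-- Davenport's 1965 bound: if `A, B ∈ ℂ[X]` are coprime with `deg A = 2k`
and `deg B = 3k` (`k ≥ 1`), then `A³ ≠ B²` and `deg (A³ - B²) ≥ k + 1`. -/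
theorem stmt3 (k : ℕ) (hk : 1 ≤ k) (A B : ℂ[X])
    (hcop : IsCoprime A B)
    (hA : A.natDegree = 2 * k) (hB : B.natDegree = 3 * k) :
    A ^ 3 ≠ B ^ 2 ∧ k + 1 ≤ (A ^ 3 - B ^ 2).natDegree := by
  obtain ⟨hne, hle⟩ := stmt3_general 3 2 k (Nat.cast_ne_zero.mpr (by lia)) A B hcop hA hB
  exact ⟨hne, by lia⟩
end

section
/- Let n ≥ 1 and let α = (α_1, …, α_p) and β = (β_1, …, β_q) be partitions of n with p and q parts respectively, and let d = gcd(α, β) (so d divides n). Suppose p + q > n/d + 1. Then there exist coprime monic polynomials P, Q ∈ ℂ[X] with factorization patterns α and β respectively such that deg(P − Q) = (d − 1)·n/d. -/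
open Polynomial

/-!
Dividing all multiplicities by `d`, and taking `d`-th powers at the end, reduces the theorem to
`d = 1`, where `P - Q` has to be a nonzero constant. For such `P` and `Q`, both `P'` and `Q'` equal
`n ∏ (X - aᵢ) ^ (αᵢ - 1) ∏ (X - bⱼ) ^ (βⱼ - 1) ∏ (X - wₖ)`, where the `wₖ` are the
`f = p + q - n - 1` remaining critical points. Together with the normalization `P(wₖ) + Q(wₖ) = 0`
this amounts to `(p - 1) + (q - 1) + f` equations in the `p + q + f` unknowns `aᵢ`, `bⱼ`, `wₖ`.

The origin is a solution, so by Krull's height theorem there is a second one with the same value of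
one chosen `aᵢ`. At that solution `P - Q` is a constant. Were it zero, all `aᵢ`, `bⱼ`, `wₖ` would be
roots of `P` and include every root of `P'`; but a polynomial with at least two distinct roots has a
critical point that is not a root. Hence `P` and `Q` have no common root. If two of the `aᵢ` were
equal, their value would be a zero of the numerator of `P' / P`, so some `bⱼ` or `wₖ`, and thus a
common root.
-/

section CommonZeros

open MvPolynomial (vanishingIdeal zeroLocus)

variable {K σ : Type*} [Field K]

lemma height_vanishingIdeal_singleton_eq (x y : σ → K) :
    (vanishingIdeal K {x}).height = (vanishingIdeal K {y}).height := by
  let translate (v : σ → K) : MvPolynomial σ K →ₐ[K] MvPolynomial σ K :=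
    MvPolynomial.aeval fun i ↦ MvPolynomial.X i + MvPolynomial.C (v i)
  have translate_comp_neg (v : σ → K) : (translate v).comp (translate (-v)) = .id K _ :=
    MvPolynomial.algHom_ext fun i ↦ by simp [translate]
  let e : MvPolynomial σ K ≃ₐ[K] MvPolynomial σ K :=
    .ofAlgHom (translate (x - y)) (translate (y - x))
      (by simpa using translate_comp_neg (x - y)) (by simpa using translate_comp_neg (y - x))
  have eval_translate (f : MvPolynomial σ K) :
      MvPolynomial.aeval y (e f) = MvPolynomial.aeval x f := by
    suffices (MvPolynomial.aeval y).comp (translate (x - y)) = MvPolynomial.aeval x from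
      DFunLike.congr_fun this f
    exact MvPolynomial.algHom_ext fun i ↦ by simp [translate]
  have comap_eq : (vanishingIdeal K {y}).comap e.toRingEquiv = vanishingIdeal K {x} := by
    ext f
    simp only [Ideal.mem_comap, MvPolynomial.mem_vanishingIdeal_singleton_iff]
    exact (eval_translate f).congr_left
  rw [← comap_eq, RingEquiv.height_comap]

variable [IsAlgClosed K] [Fintype σ]

lemma height_vanishingIdeal_singleton (x : σ → K) :
    (vanishingIdeal K {x}).height = Fintype.card σ := by
  have hdim : ringKrullDim (MvPolynomial σ K) = (Fintype.card σ : ℕ∞) := by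
    simp [MvPolynomial.ringKrullDim_of_isNoetherianRing]
  have : FiniteRingKrullDim (MvPolynomial σ K) :=
    finiteRingKrullDim_iff_ne_bot_and_top.2 <| hdim ▸ ⟨WithBot.coe_ne_bot, by
      exact_mod_cast ENat.natCast_ne_top _⟩
  obtain ⟨M, hM, hheight⟩ := Ideal.exists_isMaximal_height (R := MvPolynomial σ K)
  obtain ⟨y, rfl⟩ := MvPolynomial.isMaximal_iff_eq_vanishingIdeal_singleton.1 hM
  rw [height_vanishingIdeal_singleton_eq x y]
  exact_mod_cast hheight.trans hdim

-- The ideal of a unique common zero has height `card σ`, while Krull bounds it by `card τ`.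
lemma exists_ne_forall_eval_eq_zero {τ : Type*} [Fintype τ] (F : τ → MvPolynomial σ K)
    {x : σ → K} (hx : ∀ t, MvPolynomial.eval x (F t) = 0)
    (hcard : Fintype.card τ < Fintype.card σ) :
    ∃ y ≠ x, ∀ t, MvPolynomial.eval y (F t) = 0 := by
  by_contra! hunique
  have zeroLocus_eq : zeroLocus K (Ideal.span (Set.range F)) = {x} := by
    ext y
    simp only [MvPolynomial.zeroLocus_span, Set.forall_mem_range, Set.mem_ofPred_eq,
      MvPolynomial.aeval_eq_eval, Set.mem_singleton_iff]
    refine ⟨fun hy ↦ ?_, fun hy ↦ hy ▸ hx⟩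
    by_contra hne
    exact (hunique y hne).elim fun t ht ↦ ht (hy t)
  have hmin : vanishingIdeal K {x} ∈ (Ideal.span (Set.range F)).minimalPrimes := by
    rw [← Ideal.radical_minimalPrimes,
      ← MvPolynomial.vanishingIdeal_zeroLocus_eq_radical (K := K), zeroLocus_eq,
      Ideal.minimalPrimes_eq_subsingleton_self, Set.mem_singleton_iff]
  have hle : Fintype.card σ ≤ (Set.range F).ncard := by
    have := Ideal.height_le_card_of_mem_minimalPrimes_span (Set.finite_range F) hmin
    rw [height_vanishingIdeal_singleton] at this
    exact_mod_cast this
  have hncard : (Set.range F).ncard ≤ Fintype.card τ := by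
    simpa [Set.ncard_univ] using Set.ncard_image_le (f := F) Set.finite_univ
  exact absurd hcard (hle.trans hncard).not_gt

end CommonZeros

section RootProd

variable {ι : Type*} [Fintype ι] {R S : Type*} [CommRing R] [CommRing S]

/-- The monic polynomial `∏ᵢ (X - aᵢ) ^ mᵢ`. The `aᵢ` may coincide and the `mᵢ` may vanish; it has
factorization pattern `m` when `a` is injective and `m` is positive. -/
noncomputable def rootProd (m : ι → ℕ) (a : ι → R) : R[X] :=
  ∏ i, (X - C (a i)) ^ m i

lemma rootProd_monic (m : ι → ℕ) (a : ι → R) : (rootProd m a).Monic :=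
  monic_prod_of_monic _ _ fun i _ ↦ (monic_X_sub_C (a i)).pow (m i)

lemma natDegree_rootProd [Nontrivial R] (m : ι → ℕ) (a : ι → R) :
    (rootProd m a).natDegree = ∑ i, m i := by
  rw [rootProd, natDegree_prod_of_monic _ _ fun i _ ↦ (monic_X_sub_C (a i)).pow (m i)]
  exact Finset.sum_congr rfl fun i _ ↦ by
    rw [(monic_X_sub_C (a i)).natDegree_pow, natDegree_X_sub_C, mul_one]

lemma map_rootProd (g : R →+* S) (m : ι → ℕ) (a : ι → R) :
    (rootProd m a).map g = rootProd m (g ∘ a) := by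
  simp [rootProd, Polynomial.map_prod]

lemma rootProd_zero_right (m : ι → ℕ) : rootProd m (0 : ι → R) = X ^ ∑ i, m i := by
  simp [rootProd, Finset.prod_pow_eq_pow_sum]

lemma rootProd_mul_left (d : ℕ) (m : ι → ℕ) (a : ι → R) :
    rootProd (fun i ↦ d * m i) a = rootProd m a ^ d := by
  simp only [rootProd, mul_comm d, pow_mul, Finset.prod_pow]

lemma eval_rootProd_eq_zero_iff [IsDomain R] {m : ι → ℕ} {a : ι → R} {z : R} :
    (rootProd m a).eval z = 0 ↔ ∃ i, z = a i ∧ m i ≠ 0 := by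
  simp [rootProd, eval_prod, Finset.prod_eq_zero_iff, pow_eq_zero_iff', sub_eq_zero]

lemma eval_rootProd_self [IsDomain R] {m : ι → ℕ} (hm : ∀ i, 0 < m i) (a : ι → R) (i : ι) :
    (rootProd m a).eval (a i) = 0 :=
  eval_rootProd_eq_zero_iff.2 ⟨i, rfl, (hm i).ne'⟩

variable [DecidableEq ι]

/-- The numerator of the logarithmic derivative `∑ᵢ mᵢ / (X - aᵢ)` of `rootProd m a` over the
common denominator `∏ᵢ (X - aᵢ)`. -/
noncomputable def logDerivNum (m : ι → ℕ) (a : ι → R) : R[X] :=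
  ∑ i, C (m i : R) * ∏ l ∈ Finset.univ.erase i, (X - C (a l))

lemma map_logDerivNum (g : R →+* S) (m : ι → ℕ) (a : ι → R) :
    (logDerivNum m a).map g = logDerivNum m (g ∘ a) := by
  simp [logDerivNum, Polynomial.map_sum, Polynomial.map_prod]

lemma logDerivNum_zero_right (m : ι → ℕ) :
    logDerivNum m (0 : ι → R) = C ((∑ i, m i : ℕ) : R) * X ^ (Fintype.card ι - 1) := by
  simp [logDerivNum, Finset.card_erase_of_mem, ← Finset.sum_mul]

lemma derivative_rootProd {m : ι → ℕ} (hm : ∀ i, 0 < m i) (a : ι → R) :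
    derivative (rootProd m a) = rootProd (m - 1) a * logDerivNum m a := by
  rw [rootProd, derivative_prod_finset, logDerivNum, Finset.mul_sum]
  refine Finset.sum_congr rfl fun i _ ↦ ?_
  have split_off_one : ∏ l ∈ Finset.univ.erase i, (X - C (a l)) ^ m l =
      (∏ l ∈ Finset.univ.erase i, (X - C (a l)) ^ (m l - 1)) *
        ∏ l ∈ Finset.univ.erase i, (X - C (a l)) := by
    rw [← Finset.prod_mul_distrib]
    exact Finset.prod_congr rfl fun l _ ↦ (pow_sub_one_mul (hm l).ne' _).symm
  rw [rootProd, ← Finset.mul_prod_erase _ _ (Finset.mem_univ i), split_off_one,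
    derivative_X_sub_C_pow]
  simp only [Pi.sub_apply, Pi.one_apply]
  ring

lemma eval_logDerivNum_self (m : ι → ℕ) (a : ι → R) (i : ι) :
    (logDerivNum m a).eval (a i) = m i * ∏ l ∈ Finset.univ.erase i, (a i - a l) := by
  rw [logDerivNum, eval_finsetSum, Finset.sum_eq_single_of_mem i (Finset.mem_univ i)]
  · simp [eval_prod]
  · intro l _ hli
    rw [eval_mul, eval_prod, Finset.prod_eq_zero (i := i) (by simp [hli.symm]) (by simp), mul_zero]

lemma injective_of_eval_logDerivNum_ne_zero {m : ι → ℕ} {a : ι → R}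
    (h : ∀ i, (logDerivNum m a).eval (a i) ≠ 0) : Function.Injective a := by
  intro i j hij
  by_contra hne
  refine h i ?_
  rw [eval_logDerivNum_self,
    Finset.prod_eq_zero (i := j) (by simp [Ne.symm hne]) (sub_eq_zero.2 hij), mul_zero]

end RootProd

section RootsDerivative

variable {K : Type*} [Field K] [CharZero K]

lemma roots_eq_roots_derivative_add_dedup [DecidableEq K] {P : K[X]} (hP : P ≠ 0)
    (h : ∀ z, (derivative P).IsRoot z → P.IsRoot z) :
    P.roots = (derivative P).roots + P.roots.dedup := by
  ext z
  rw [Multiset.count_add, Multiset.count_dedup, count_roots, count_roots]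
  by_cases hz : P.IsRoot z
  · rw [derivative_rootMultiplicity_of_root hz, if_pos ((mem_roots hP).2 hz),
      Nat.sub_add_cancel ((rootMultiplicity_pos hP).2 hz)]
  · rw [if_neg (mt isRoot_of_mem_roots hz), rootMultiplicity_eq_zero hz,
      rootMultiplicity_eq_zero (mt (h z) hz)]

variable [IsAlgClosed K]

lemma subsingleton_setOf_isRoot_of_isRoot_derivative {P : K[X]} (hP : P ≠ 0)
    (h : ∀ z, (derivative P).IsRoot z → P.IsRoot z) : {z | P.IsRoot z}.Subsingleton := by
  classical
  have hcard := congrArg Multiset.card (roots_eq_roots_derivative_add_dedup hP h)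
  rw [Multiset.card_add, IsAlgClosed.card_roots_eq_natDegree, IsAlgClosed.card_roots_eq_natDegree,
    natDegree_derivative] at hcard
  have card_le_one : P.roots.toFinset.card ≤ 1 := by
    rw [Multiset.card_toFinset]
    omega
  intro x hx y hy
  exact Finset.card_le_one.1 card_le_one x (by simpa [hP] using hx) y (by simpa [hP] using hy)

end RootsDerivative

section CriticalConfig

variable {ι κ φ : Type*} [Fintype ι] [Fintype κ] [Fintype φ] [DecidableEq ι]

section CommRing

variable {R S : Type*} [CommRing R] [CommRing S]

/-- For `P = rootProd α a` of degree `n`, the difference between the numerator of `P' / P` and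
`n ∏ⱼ (X - bⱼ) ^ (βⱼ - 1) ∏ₖ (X - wₖ)`. It vanishes when the zeros of `P' / P` are the `bⱼ`, with
multiplicity `βⱼ - 1`, and the `wₖ`. -/
noncomputable def criticalDefect (α : ι → ℕ) (β : κ → ℕ) (a : ι → R) (b : κ → R) (w : φ → R) :
    R[X] :=
  logDerivNum α a - C ((∑ i, α i : ℕ) : R) * (rootProd (β - 1) b * rootProd 1 w)

lemma map_criticalDefect (g : R →+* S) (α : ι → ℕ) (β : κ → ℕ) (a : ι → R) (b : κ → R)
    (w : φ → R) :
    (criticalDefect α β a b w).map g = criticalDefect α β (g ∘ a) (g ∘ b) (g ∘ w) := by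
  simp only [criticalDefect, Polynomial.map_sub, Polynomial.map_mul, C_eq_natCast,
    Polynomial.map_natCast, map_logDerivNum, map_rootProd]

lemma criticalDefect_zero (α : ι → ℕ) {β : κ → ℕ}
    (hι : Fintype.card ι = ∑ j, (β j - 1) + Fintype.card φ + 1) :
    criticalDefect α β (0 : ι → R) 0 (0 : φ → R) = 0 := by
  simp [criticalDefect, logDerivNum_zero_right, rootProd_zero_right, hι, pow_add]

lemma degree_criticalDefect_lt [Nontrivial R] (α : ι → ℕ) {β : κ → ℕ} (a : ι → R) (b : κ → R)
    (w : φ → R) (hι : Fintype.card ι = ∑ j, (β j - 1) + Fintype.card φ + 1) :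
    (criticalDefect α β a b w).degree < (Fintype.card ι - 1 : ℕ) := by
  set T := rootProd (β - 1) b * rootProd 1 w with hT
  have monic_T : T.Monic := (rootProd_monic _ b).mul (rootProd_monic _ w)
  have natDegree_T : T.natDegree = Fintype.card ι - 1 := by
    rw [hT, (rootProd_monic _ b).natDegree_mul (rootProd_monic _ w), natDegree_rootProd,
      natDegree_rootProd]
    simp [hι]
  have defect_eq : criticalDefect α β a b w =
      ∑ i, (α i : R) • (∏ l ∈ Finset.univ.erase i, (X - C (a l)) - T) := by
    simp [criticalDefect, logDerivNum, smul_eq_C_mul, mul_sub, Finset.sum_sub_distrib,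
      Finset.sum_mul, hT]
  rw [defect_eq, ← mem_degreeLT]
  refine Submodule.sum_mem _ fun i _ ↦ Submodule.smul_mem _ _ (mem_degreeLT.2 ?_)
  have monic_prod := monic_prod_X_sub_C a (Finset.univ.erase i)
  have degree_prod_erase :
      (∏ l ∈ Finset.univ.erase i, (X - C (a l))).degree =
        ((Fintype.card ι - 1 : ℕ) : WithBot ℕ) := by
    rw [degree_eq_natDegree monic_prod.ne_zero, natDegree_finsetProd_X_sub_C_eq_card,
      Finset.card_erase_of_mem (Finset.mem_univ i), Finset.card_univ]
  rw [← degree_prod_erase]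
  refine degree_sub_lt_left ?_ monic_prod.ne_zero (monic_prod.trans monic_T.symm)
  rw [degree_prod_erase, degree_eq_natDegree monic_T.ne_zero, natDegree_T]

lemma criticalDefect_eq_zero_iff [Nontrivial R] (α : ι → ℕ) {β : κ → ℕ} (a : ι → R) (b : κ → R)
    (w : φ → R) (hι : Fintype.card ι = ∑ j, (β j - 1) + Fintype.card φ + 1) :
    criticalDefect α β a b w = 0 ↔
      ∀ k : Fin (Fintype.card ι - 1), (criticalDefect α β a b w).coeff k = 0 := by
  refine ⟨fun h k ↦ by simp [h], fun h ↦ ?_⟩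
  ext k
  rcases lt_or_ge k (Fintype.card ι - 1) with hk | hk
  · exact h ⟨k, hk⟩
  · exact coeff_eq_zero_of_degree_lt
      ((degree_criticalDefect_lt α a b w hι).trans_le (by exact_mod_cast hk))

variable [DecidableEq κ]

/-- The polynomial system whose solutions give `P = rootProd α a` and `Q = rootProd β b` with
`P - Q` constant: up to their leading coefficients, `P'` and `Q'` both equal
`∏ᵢ (X - aᵢ) ^ (αᵢ - 1) ∏ⱼ (X - bⱼ) ^ (βⱼ - 1) ∏ₖ (X - wₖ)`. The normalization `P(wₖ) + Q(wₖ) = 0`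
of the remaining critical points `wₖ` ensures that none of them is a root of `P` or `Q` when
`P ≠ Q`. -/
structure IsCriticalConfig (α : ι → ℕ) (β : κ → ℕ) (a : ι → R) (b : κ → R) (w : φ → R) : Prop where
  defect_left : criticalDefect α β a b w = 0
  defect_right : criticalDefect β α b a w = 0
  eval_add_eval : ∀ k, (rootProd α a).eval (w k) + (rootProd β b).eval (w k) = 0

namespace IsCriticalConfig

variable {α : ι → ℕ} {β : κ → ℕ} {a : ι → R} {b : κ → R} {w : φ → R}

lemma symm (h : IsCriticalConfig α β a b w) : IsCriticalConfig β α b a w where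
  defect_left := h.defect_right
  defect_right := h.defect_left
  eval_add_eval k := by rw [add_comm, h.eval_add_eval]

lemma logDerivNum_left (h : IsCriticalConfig α β a b w) :
    logDerivNum α a = C ((∑ i, α i : ℕ) : R) * (rootProd (β - 1) b * rootProd 1 w) :=
  sub_eq_zero.1 h.defect_left

lemma derivative_left (h : IsCriticalConfig α β a b w) (hα : ∀ i, 0 < α i) :
    derivative (rootProd α a) =
      C ((∑ i, α i : ℕ) : R) * (rootProd (α - 1) a * rootProd (β - 1) b * rootProd 1 w) := by
  rw [derivative_rootProd hα, h.logDerivNum_left]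
  ring

lemma zero (hι : Fintype.card ι = ∑ j, (β j - 1) + Fintype.card φ + 1)
    (hκ : Fintype.card κ = ∑ i, (α i - 1) + Fintype.card φ + 1)
    (hα : ∑ i, α i ≠ 0) (hβ : ∑ j, β j ≠ 0) :
    IsCriticalConfig α β (0 : ι → R) (0 : κ → R) (0 : φ → R) where
  defect_left := criticalDefect_zero α hι
  defect_right := criticalDefect_zero β hκ
  eval_add_eval k := by simp [rootProd_zero_right, hα, hβ]

lemma exists_sub_eq_C [IsDomain R] [CharZero R] (h : IsCriticalConfig α β a b w)
    (hα : ∀ i, 0 < α i) (hβ : ∀ j, 0 < β j) (hsum : ∑ i, α i = ∑ j, β j) :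
    ∃ c, rootProd α a - rootProd β b = C c := by
  have derivative_eq : derivative (rootProd α a - rootProd β b) = 0 := by
    rw [derivative_sub, h.derivative_left hα, h.symm.derivative_left hβ, hsum]
    ring
  exact ⟨_, eq_C_of_natDegree_eq_zero (derivative_eq_zero.1 derivative_eq)⟩

lemma mem_range_of_isRoot_logDerivNum [IsDomain R] [CharZero R] (h : IsCriticalConfig α β a b w)
    (hα : ∑ i, α i ≠ 0) {z : R} (hz : (logDerivNum α a).IsRoot z) :
    z ∈ Set.range b ∪ Set.range w := by
  rw [h.logDerivNum_left, IsRoot.def, eval_C_mul, mul_eq_zero_iff_left (Nat.cast_ne_zero.2 hα),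
    eval_mul, mul_eq_zero, eval_rootProd_eq_zero_iff, eval_rootProd_eq_zero_iff] at hz
  rcases hz with ⟨j, rfl, -⟩ | ⟨k, rfl, -⟩
  · exact .inl ⟨j, rfl⟩
  · exact .inr ⟨k, rfl⟩

lemma eval_right_eq_zero [IsDomain R] (h : IsCriticalConfig α β a b w) (hβ : ∀ j, 0 < β j) {z : R}
    (hz : z ∈ Set.range b ∪ Set.range w) (hzP : (rootProd α a).eval z = 0) :
    (rootProd β b).eval z = 0 := by
  rcases hz with ⟨j, rfl⟩ | ⟨k, rfl⟩
  · exact eval_rootProd_self hβ b j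
  · simpa [hzP] using h.eval_add_eval k

lemma injective_left [IsDomain R] [CharZero R] (h : IsCriticalConfig α β a b w)
    (hα : ∀ i, 0 < α i) (hβ : ∀ j, 0 < β j) {c : R} (hc : c ≠ 0)
    (hsub : rootProd α a - rootProd β b = C c) : Function.Injective a := by
  refine injective_of_eval_logDerivNum_ne_zero (m := α) fun i hi ↦ hc ?_
  have sum_ne_zero : ∑ i, α i ≠ 0 := (Finset.sum_pos (fun i _ ↦ hα i) ⟨i, Finset.mem_univ i⟩).ne'
  have evalP : (rootProd α a).eval (a i) = 0 := eval_rootProd_self hα a i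
  have evalQ : (rootProd β b).eval (a i) = 0 :=
    h.eval_right_eq_zero hβ (h.mem_range_of_isRoot_logDerivNum sum_ne_zero hi) evalP
  simpa [evalP, evalQ] using congrArg (eval (a i)) hsub.symm

end IsCriticalConfig

end CommRing

section Field

variable [DecidableEq κ] {K : Type*} [Field K] {α : ι → ℕ} {β : κ → ℕ}

lemma exists_mvPolynomial_isCriticalConfig_iff
    (hι : Fintype.card ι = ∑ j, (β j - 1) + Fintype.card φ + 1)
    (hκ : Fintype.card κ = ∑ i, (α i - 1) + Fintype.card φ + 1) :
    ∃ F : Fin (Fintype.card ι - 1) ⊕ Fin (Fintype.card κ - 1) ⊕ φ → MvPolynomial (ι ⊕ κ ⊕ φ) K,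
      ∀ x, (∀ t, MvPolynomial.eval x (F t) = 0) ↔
        IsCriticalConfig α β (x ∘ .inl) (x ∘ .inr ∘ .inl) (x ∘ .inr ∘ .inr) := by
  let A (i : ι) : MvPolynomial (ι ⊕ κ ⊕ φ) K := MvPolynomial.X (.inl i)
  let B (j : κ) : MvPolynomial (ι ⊕ κ ⊕ φ) K := MvPolynomial.X (.inr (.inl j))
  let W (k : φ) : MvPolynomial (ι ⊕ κ ⊕ φ) K := MvPolynomial.X (.inr (.inr k))
  refine ⟨Sum.elim (fun k ↦ (criticalDefect α β A B W).coeff k)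
    (Sum.elim (fun k ↦ (criticalDefect β α B A W).coeff k)
      fun k ↦ (rootProd α A).eval (W k) + (rootProd β B).eval (W k)), fun x ↦ ?_⟩
  have eval_A : MvPolynomial.eval x ∘ A = x ∘ .inl := by ext; simp [A]
  have eval_B : MvPolynomial.eval x ∘ B = x ∘ .inr ∘ .inl := by ext; simp [B]
  have eval_W : MvPolynomial.eval x ∘ W = x ∘ .inr ∘ .inr := by ext; simp [W]
  have eval_eval (Q : (MvPolynomial (ι ⊕ κ ⊕ φ) K)[X]) (k : φ) :
      MvPolynomial.eval x (Q.eval (W k)) =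
        (Q.map (MvPolynomial.eval x)).eval ((x ∘ .inr ∘ .inr) k) := by
    rw [← eval_W, Function.comp_apply, eval_map_apply]
  simp only [Sum.forall, Sum.elim_inl, Sum.elim_inr, ← coeff_map, map_criticalDefect, map_add,
    eval_eval, map_rootProd, eval_A, eval_B, eval_W, ← criticalDefect_eq_zero_iff _ _ _ _ hι,
    ← criticalDefect_eq_zero_iff _ _ _ _ hκ]
  exact ⟨fun ⟨left, right, values⟩ ↦ ⟨left, right, values⟩,
    fun h ↦ ⟨h.defect_left, h.defect_right, h.eval_add_eval⟩⟩

variable [IsAlgClosed K]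

lemma IsCriticalConfig.rootProd_ne [CharZero K] [Nonempty ι] {a : ι → K} {b : κ → K} {w : φ → K}
    (h : IsCriticalConfig α β a b w) (hα : ∀ i, 0 < α i) (hβ : ∀ j, 0 < β j)
    (hnontrivial : (Set.range a ∪ (Set.range b ∪ Set.range w)).Nontrivial) :
    rootProd α a ≠ rootProd β b := by
  intro hPQ
  have sum_ne_zero : ∑ i, α i ≠ 0 := (Finset.sum_pos (fun i _ ↦ hα i) Finset.univ_nonempty).ne'
  have isRoot_of_mem : ∀ z ∈ Set.range a ∪ (Set.range b ∪ Set.range w),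
      (rootProd α a).IsRoot z := by
    rintro _ (⟨i, rfl⟩ | ⟨j, rfl⟩ | ⟨k, rfl⟩)
    · exact eval_rootProd_self hα a i
    · exact hPQ ▸ eval_rootProd_self hβ b j
    · simpa [← hPQ, ← two_mul] using h.eval_add_eval k
  have mem_of_isRoot_derivative (z) (hz : (derivative (rootProd α a)).IsRoot z) :
      z ∈ Set.range a ∪ (Set.range b ∪ Set.range w) := by
    rw [derivative_rootProd hα, IsRoot.def, eval_mul, mul_eq_zero, eval_rootProd_eq_zero_iff] at hz
    exact hz.imp (fun ⟨i, hi, _⟩ ↦ ⟨i, hi.symm⟩) (h.mem_range_of_isRoot_logDerivNum sum_ne_zero)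
  exact hnontrivial.not_subsingleton <|
    (subsingleton_setOf_isRoot_of_isRoot_derivative (rootProd_monic α a).ne_zero
      fun z hz ↦ isRoot_of_mem z (mem_of_isRoot_derivative z hz)).anti isRoot_of_mem

lemma exists_isCriticalConfig_nontrivial (hα : ∑ i, α i ≠ 0) (hβ : ∑ j, β j ≠ 0)
    (hι : Fintype.card ι = ∑ j, (β j - 1) + Fintype.card φ + 1)
    (hκ : Fintype.card κ = ∑ i, (α i - 1) + Fintype.card φ + 1) :
    ∃ (a : ι → K) (b : κ → K) (w : φ → K), IsCriticalConfig α β a b w ∧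
      (Set.range a ∪ (Set.range b ∪ Set.range w)).Nontrivial := by
  obtain ⟨F, hF⟩ := exists_mvPolynomial_isCriticalConfig_iff (K := K) hι hκ
  -- Requiring `a i₀ = 0` excludes the nonzero constant solutions and still leaves fewer equations
  -- than unknowns.
  obtain ⟨i₀⟩ : Nonempty ι := Fintype.card_pos_iff.1 (by omega)
  let F₀ : Unit ⊕ _ → MvPolynomial (ι ⊕ κ ⊕ φ) K := Sum.elim (fun _ ↦ MvPolynomial.X (.inl i₀)) F
  have F₀_zero : ∀ t, MvPolynomial.eval 0 (F₀ t) = 0 :=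
    Sum.forall.2 ⟨fun _ ↦ by simp [F₀], (hF 0).2 (.zero hι hκ hα hβ)⟩
  obtain ⟨x, hx, hxF⟩ := exists_ne_forall_eval_eq_zero F₀ F₀_zero (by
    simp only [Fintype.card_sum, Fintype.card_fin, Fintype.card_unit]
    omega)
  have x_base : x (.inl i₀) = 0 := by simpa [F₀] using hxF (.inl ())
  obtain ⟨s, hs⟩ := Function.ne_iff.1 hx
  refine ⟨x ∘ .inl, x ∘ .inr ∘ .inl, x ∘ .inr ∘ .inr,
    (hF x).1 fun t ↦ hxF (.inr t), x s, ?_, 0, .inl ⟨i₀, x_base⟩, hs⟩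
  rcases s with i | j | k
  · exact .inl ⟨i, rfl⟩
  · exact .inr (.inl ⟨j, rfl⟩)
  · exact .inr (.inr ⟨k, rfl⟩)

end Field

end CriticalConfig

lemma sum_sub_one_add_card {ι : Type*} [Fintype ι] {m : ι → ℕ} (hm : ∀ i, 0 < m i) :
    ∑ i, (m i - 1) + Fintype.card ι = ∑ i, m i := by
  rw [Fintype.card_eq_sum_ones, ← Finset.sum_add_distrib]
  exact Finset.sum_congr rfl fun i _ ↦ Nat.sub_add_cancel (hm i)

theorem exists_rootProd_sub_eq_C {K ι κ : Type*} [Field K] [IsAlgClosed K] [CharZero K]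
    [Fintype ι] [Fintype κ] {α : ι → ℕ} {β : κ → ℕ} (hα : ∀ i, 0 < α i) (hβ : ∀ j, 0 < β j)
    (hsum : ∑ i, α i = ∑ j, β j) (hcard : ∑ i, α i + 1 ≤ Fintype.card ι + Fintype.card κ) :
    ∃ (a : ι → K) (b : κ → K) (c : K), c ≠ 0 ∧ Function.Injective a ∧ Function.Injective b ∧
      rootProd α a - rootProd β b = C c := by
  classical
  obtain ⟨f, hf⟩ := Nat.exists_eq_add_of_le hcard
  have sum_α := sum_sub_one_add_card hα
  have sum_β := sum_sub_one_add_card hβ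
  have hι : Fintype.card ι = ∑ j, (β j - 1) + Fintype.card (Fin f) + 1 := by
    rw [Fintype.card_fin]; omega
  have hκ : Fintype.card κ = ∑ i, (α i - 1) + Fintype.card (Fin f) + 1 := by
    rw [Fintype.card_fin]; omega
  have : Nonempty ι := Fintype.card_pos_iff.1 (by omega)
  obtain ⟨a, b, w, h, hnontrivial⟩ := exists_isCriticalConfig_nontrivial (K := K)
    (by omega) (by omega) hι hκ
  obtain ⟨c, hc⟩ := h.exists_sub_eq_C hα hβ hsum
  have c_ne_zero : c ≠ 0 := by
    rintro rfl
    exact h.rootProd_ne hα hβ hnontrivial (sub_eq_zero.1 (by rw [hc, C_0]))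
  exact ⟨a, b, c, c_ne_zero, h.injective_left hα hβ c_ne_zero hc,
    h.symm.injective_left hβ hα (neg_ne_zero.2 c_ne_zero) (by rw [← neg_sub, hc, C_neg]), hc⟩

section PowSubPow

variable {R : Type*} [CommRing R] {P Q : R[X]}

lemma natDegree_geomSum₂_term (hP : P.Monic) (hQ : Q.Monic) (hdeg : P.natDegree = Q.natDegree)
    {d i : ℕ} (hi : i ∈ Finset.range d) :
    (P ^ i * Q ^ (d - 1 - i)).natDegree = (d - 1) * P.natDegree := by
  rw [(hP.pow _).natDegree_mul (hQ.pow _), hP.natDegree_pow, hQ.natDegree_pow, ← hdeg, ← add_mul,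
    Nat.add_sub_cancel' (Nat.le_sub_one_of_lt (Finset.mem_range.1 hi))]

lemma natDegree_geomSum₂_le (hP : P.Monic) (hQ : Q.Monic) (hdeg : P.natDegree = Q.natDegree)
    (d : ℕ) :
    (∑ i ∈ Finset.range d, P ^ i * Q ^ (d - 1 - i)).natDegree ≤ (d - 1) * P.natDegree :=
  natDegree_sum_le_of_forall_le _ _ fun _ hi ↦ (natDegree_geomSum₂_term hP hQ hdeg hi).le

lemma coeff_geomSum₂ (hP : P.Monic) (hQ : Q.Monic) (hdeg : P.natDegree = Q.natDegree) (d : ℕ) :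
    (∑ i ∈ Finset.range d, P ^ i * Q ^ (d - 1 - i)).coeff ((d - 1) * P.natDegree) = d := by
  have coeff_term (i) (hi : i ∈ Finset.range d) :
      (P ^ i * Q ^ (d - 1 - i)).coeff ((d - 1) * P.natDegree) = 1 :=
    natDegree_geomSum₂_term hP hQ hdeg hi ▸ ((hP.pow i).mul (hQ.pow _)).coeff_natDegree
  rw [finsetSum_coeff, Finset.sum_congr rfl coeff_term, Finset.sum_const, Finset.card_range,
    nsmul_one]

lemma natDegree_pow_sub_pow [CharZero R] [IsDomain R] (hP : P.Monic) (hQ : Q.Monic)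
    (hdeg : P.natDegree = Q.natDegree) (hPQ : P ≠ Q) {d : ℕ} (hd : d ≠ 0) :
    (P ^ d - Q ^ d).natDegree = (d - 1) * P.natDegree + (P - Q).natDegree := by
  have coeff_ne_zero :
      (∑ i ∈ Finset.range d, P ^ i * Q ^ (d - 1 - i)).coeff ((d - 1) * P.natDegree) ≠ 0 := by
    rw [coeff_geomSum₂ hP hQ hdeg]
    exact_mod_cast hd
  rw [← (Commute.all P Q).geom_sum₂_mul,
    natDegree_mul (fun h ↦ coeff_ne_zero (by rw [h, coeff_zero])) (sub_ne_zero.2 hPQ),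
    natDegree_eq_of_le_of_coeff_ne_zero (natDegree_geomSum₂_le hP hQ hdeg d) coeff_ne_zero]

end PowSubPow

lemma isCoprime_of_sub_eq_C {K : Type*} [Field K] {P Q : K[X]} {c : K} (hc : c ≠ 0)
    (h : P - Q = C c) : IsCoprime P Q :=
  ⟨C c⁻¹, -C c⁻¹, by
    rw [neg_mul, ← sub_eq_add_neg, ← mul_sub, h, ← C_mul, inv_mul_cancel₀ hc, C_1]⟩

theorem stmt7_general {K ι κ : Type*} [Field K] [IsAlgClosed K] [CharZero K] [Fintype ι]
    [Fintype κ] {n d : ℕ} {α : ι → ℕ} {β : κ → ℕ} (hα : ∀ i, 0 < α i) (hβ : ∀ j, 0 < β j)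
    (hαsum : ∑ i, α i = n) (hβsum : ∑ j, β j = n) (hdα : ∀ i, d ∣ α i) (hdβ : ∀ j, d ∣ β j)
    (hcard : n / d + 1 ≤ Fintype.card ι + Fintype.card κ) :
    ∃ (P Q : K[X]) (a : ι → K) (b : κ → K),
      Function.Injective a ∧ Function.Injective b ∧
      P = ∏ i, (X - C (a i)) ^ α i ∧
      Q = ∏ j, (X - C (b j)) ^ β j ∧
      IsCoprime P Q ∧
      (P - Q).natDegree = (d - 1) * (n / d) := by
  have d_pos : 0 < d := by
    obtain ⟨i | j⟩ : Nonempty (ι ⊕ κ) := Fintype.card_pos_iff.1 (by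
      rw [Fintype.card_sum]
      exact (Nat.succ_pos _).trans_le hcard)
    · exact Nat.pos_of_dvd_of_pos (hdα i) (hα i)
    · exact Nat.pos_of_dvd_of_pos (hdβ j) (hβ j)
  choose μ hμ using hdα
  choose ν hν using hdβ
  obtain rfl : α = fun i ↦ d * μ i := funext hμ
  obtain rfl : β = fun j ↦ d * ν j := funext hν
  have sum_μ : ∑ i, μ i = n / d := by
    rw [← hαsum, ← Finset.mul_sum, Nat.mul_div_cancel_left _ d_pos]
  have sum_ν : ∑ j, ν j = n / d := by
    rw [← hβsum, ← Finset.mul_sum, Nat.mul_div_cancel_left _ d_pos]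
  obtain ⟨a, b, c, hc, ha, hb, hsub⟩ := exists_rootProd_sub_eq_C (K := K)
    (fun i ↦ pos_of_mul_pos_right (hα i) d.zero_le) (fun j ↦ pos_of_mul_pos_right (hβ j) d.zero_le)
    (sum_μ.trans sum_ν.symm) (sum_μ ▸ hcard)
  refine ⟨rootProd μ a ^ d, rootProd ν b ^ d, a, b, ha, hb, (rootProd_mul_left d μ a).symm,
    (rootProd_mul_left d ν b).symm, (isCoprime_of_sub_eq_C hc hsub).pow, ?_⟩
  have ne : rootProd μ a ≠ rootProd ν b := sub_ne_zero.1 (hsub ▸ C_ne_zero.2 hc)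
  rw [natDegree_pow_sub_pow (rootProd_monic μ a) (rootProd_monic ν b)
    (by rw [natDegree_rootProd, natDegree_rootProd, sum_μ, sum_ν]) ne d_pos.ne', hsub,
    natDegree_C, add_zero, natDegree_rootProd, sum_μ]

/-- Attainability of Zannier's weak bound: if `p + q > n/d + 1`, then there
exist coprime monic `P, Q` with factorization patterns `α, β` such that
`deg (P - Q) = (d - 1)·n/d`. -/
theorem stmt7 (n p q d : ℕ) (hn : 1 ≤ n)
    (α : Fin p → ℕ) (β : Fin q → ℕ)
    (hα : ∀ i, 0 < α i) (hβ : ∀ j, 0 < β j)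
    (hαsum : ∑ i, α i = n) (hβsum : ∑ j, β j = n)
    (hd : d = Nat.gcd (Finset.univ.gcd α) (Finset.univ.gcd β))
    (hpq : n / d + 1 < p + q) :
    ∃ (P Q : ℂ[X]) (a : Fin p → ℂ) (b : Fin q → ℂ),
      Function.Injective a ∧ Function.Injective b ∧
      P = ∏ i, (X - C (a i)) ^ α i ∧
      Q = ∏ j, (X - C (b j)) ^ β j ∧
      IsCoprime P Q ∧
      (P - Q).natDegree = (d - 1) * (n / d) :=
  stmt7_general hα hβ hαsum hβsum
    (fun i ↦ hd ▸ (Nat.gcd_dvd_left _ _).trans (Finset.gcd_dvd (Finset.mem_univ i)))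
    (fun j ↦ hd ▸ (Nat.gcd_dvd_right _ _).trans (Finset.gcd_dvd (Finset.mem_univ j)))
    (by simpa using hpq.le)
end
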